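/- Let P ⊆ ℝⁿ be a convex body containing 0 in its interior and let g : ℝⁿ → (0,∞) be a smooth positive function. If φ₀ and φ₁ are two smooth convex functions on ℝⁿ, each satisfying g(∇φ_i(x))·det D²φ_i(x) = e^{−φ_i(x)} for all x ∈ ℝⁿ and such that ∇φ_i is a diffeomorphism from ℝⁿ onto the interior of P, then there exists a vector a ∈ ℝⁿ such that φ₁(x) = φ₀(x + a) for all x ∈ ℝⁿ. -/

import Mathlib

open scoped RealInnerProductSpace
open MeasureTheory

/-- The determinant of the Hessian matrix `(∂²φ/∂x_i∂x_j)(x)`. -/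
noncomputable def hessDet {n : ℕ} (φ : EuclideanSpace ℝ (Fin n) → ℝ)
    (x : EuclideanSpace ℝ (Fin n)) : ℝ :=
  Matrix.det (Matrix.of fun i j : Fin n =>
    iteratedFDeriv ℝ 2 φ x ![EuclideanSpace.single i 1, EuclideanSpace.single j 1])

/-- The gradient map of `φ` is a diffeomorphism from `ℝⁿ` onto `S`: a smooth
bijection onto `S` with smooth inverse. -/
def IsGradDiffeoOnto {n : ℕ} (φ : EuclideanSpace ℝ (Fin n) → ℝ)
    (S : Set (EuclideanSpace ℝ (Fin n))) : Prop :=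
  ContDiff ℝ (⊤ : ℕ∞) (gradient φ) ∧
  Function.Injective (gradient φ) ∧
  Set.range (gradient φ) = S ∧
  ∃ ψ : EuclideanSpace ℝ (Fin n) → EuclideanSpace ℝ (Fin n),
    ContDiffOn ℝ (⊤ : ℕ∞) ψ S ∧ ∀ x, ψ (gradient φ x) = x



lemma posdef_log {n : ℕ} (N : Matrix (Fin n) (Fin n) ℝ) (hN : N.PosDef) :
    0 < N.det ∧ Real.log N.det ≤ N.trace - n ∧ (Real.log N.det = N.trace - n → N = 1) := by
  have hd : N.det = ∏ i, hN.1.eigenvalues i := by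
    simpa using hN.1.det_eq_prod_eigenvalues
  have ht : N.trace = ∑ i, hN.1.eigenvalues i := by
    simpa using hN.1.trace_eq_sum_eigenvalues
  have hp := hN.eigenvalues_pos
  have hl : Real.log N.det = ∑ i, Real.log (hN.1.eigenvalues i) := by
    rw [hd, Real.log_prod]; intro i _; exact (hp i).ne'
  have hs : N.trace - n = ∑ i, (hN.1.eigenvalues i - 1) := by
    rw [ht]; simp
  have hle : ∀ i ∈ Finset.univ, Real.log (hN.1.eigenvalues i) ≤ hN.1.eigenvalues i - 1 :=
    fun i _ => Real.log_le_sub_one_of_pos (hp i)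
  refine ⟨hN.det_pos, ?_, ?_⟩
  · rw [hl, hs]; exact Finset.sum_le_sum hle
  · rw [hl, hs]
    intro h
    rw [Finset.sum_eq_sum_iff_of_le hle] at h
    have h1 : ∀ i, hN.1.eigenvalues i = 1 := by
      intro i
      by_contra hne
      exact (Real.log_lt_sub_one_of_pos (hp i) hne).ne (h i (Finset.mem_univ i))
    have := hN.1.spectral_theorem
    have he : hN.1.eigenvalues = fun _ => 1 := funext h1
    rw [he] at this
    rw [this]
    simp [Function.comp_def]

open scoped MatrixOrder Matrix.Norms.L2Operator in
lemma mat_ineq {n : ℕ} (A B M : Matrix (Fin n) (Fin n) ℝ) (hA : A.PosDef) (hB : B.PosDef)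
    (h : A * M = B) :
    0 < M.det ∧ Real.log M.det ≤ M.trace - n ∧ (Real.log M.det = M.trace - n → M = 1) := by
  obtain ⟨C, hC, hCA⟩ : ∃ C : Matrix (Fin n) (Fin n) ℝ, IsUnit C ∧ A⁻¹ = C.conjTranspose * C := by
    obtain ⟨C, hC⟩ := CStarAlgebra.nonneg_iff_eq_star_mul_self.mp hA.inv.posSemidef.nonneg
    refine ⟨C, ?_, hC⟩
    have := hA.inv.isUnit
    rw [hC] at this
    rw [Matrix.isUnit_iff_isUnit_det, Matrix.det_mul] at this
    rw [Matrix.isUnit_iff_isUnit_det]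
    exact isUnit_of_mul_isUnit_right this
  have hM : M = C.conjTranspose * C * B := by
    rw [← hCA, ← h, ← mul_assoc, Matrix.nonsing_inv_mul _ ((Matrix.isUnit_iff_isUnit_det _).1 hA.isUnit), one_mul]
  have hN : (C * B * C.conjTranspose).PosDef := by
    apply hB.mul_mul_conjTranspose_same
    exact Matrix.vecMul_injective_of_isUnit hC
  have hdet : M.det = (C * B * C.conjTranspose).det := by
    rw [hM]; simp only [Matrix.det_mul]; ring
  have htr : M.trace = (C * B * C.conjTranspose).trace := by
    rw [hM, mul_assoc, Matrix.trace_mul_comm]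
  obtain ⟨h1, h2, h3⟩ := posdef_log _ hN
  rw [hdet, htr]
  refine ⟨h1, h2, fun he => ?_⟩
  have h4 := h3 he
  have hCi : IsUnit C.conjTranspose := (Matrix.isUnit_conjTranspose C).2 hC
  apply hCi.mul_right_cancel
  rw [hM, one_mul, mul_assoc, mul_assoc, ← mul_assoc C, h4, mul_one]

noncomputable def dvg {n : ℕ} (Y : EuclideanSpace ℝ (Fin n) → EuclideanSpace ℝ (Fin n))
    (x : EuclideanSpace ℝ (Fin n)) : ℝ :=
  ∑ i, (fderiv ℝ Y x (EuclideanSpace.single i 1)) i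

lemma ibp {n : ℕ} (Y : EuclideanSpace ℝ (Fin n) → EuclideanSpace ℝ (Fin n))
    (hY : ContDiff ℝ 1 Y) (c : EuclideanSpace ℝ (Fin n) → ℝ) (hc : ContDiff ℝ 1 c)
    (hcs : HasCompactSupport c) :
    ∫ x, c x * dvg Y x = - ∫ x, fderiv ℝ c x (Y x) := by
  have hYi : ∀ i, ContDiff ℝ 1 (fun x => Y x i) := fun i => by fun_prop
  have hd : ∀ i x, fderiv ℝ (fun x => Y x i) x (EuclideanSpace.single i 1) =
      (fderiv ℝ Y x (EuclideanSpace.single i 1)) i := by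
    intro i x
    have h1 : HasFDerivAt Y (fderiv ℝ Y x) x := (hY.differentiable one_ne_zero x).hasFDerivAt
    have h2 := ((EuclideanSpace.proj i : EuclideanSpace ℝ (Fin n) →L[ℝ] ℝ).hasFDerivAt (x := Y x)).comp x h1
    have h3 : fderiv ℝ (fun x => Y x i) x = _ := h2.fderiv
    rw [h3]; rfl
  have hsum : ∀ x, fderiv ℝ c x (Y x) =
      ∑ i, fderiv ℝ c x (EuclideanSpace.single i 1) * Y x i := by
    intro x
    conv_lhs => rw [← (EuclideanSpace.basisFun (Fin n) ℝ).sum_repr (Y x)]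
    simp [map_sum, mul_comm]
  have hcd := hc.continuous_fderiv one_ne_zero
  have hint1 : ∀ i, Integrable (fun x => fderiv ℝ c x (EuclideanSpace.single i 1) * Y x i) := by
    intro i
    apply Continuous.integrable_of_hasCompactSupport
    · have := (hYi i).continuous
      fun_prop
    · apply HasCompactSupport.mul_right
      exact hcs.fderiv_apply ℝ _
  have hint2 : ∀ i, Integrable (fun x => c x * fderiv ℝ (fun x => Y x i) x (EuclideanSpace.single i 1)) := by
    intro i
    apply Continuous.integrable_of_hasCompactSupport
    · have := (hYi i).continuous_fderiv one_ne_zero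
      have := hc.continuous
      fun_prop
    · exact hcs.mul_right
  have hint3 : ∀ i, Integrable (fun x => c x * Y x i) := by
    intro i
    apply Continuous.integrable_of_hasCompactSupport
    · have := (hYi i).continuous
      have := hc.continuous
      fun_prop
    · exact hcs.mul_right
  simp only [hsum, dvg, Finset.mul_sum]
  rw [integral_finsetSum _ (fun i _ => hint1 i), integral_finsetSum, ← Finset.sum_neg_distrib]
  · refine Finset.sum_congr rfl fun i _ => ?_
    simp only [← hd]
    exact integral_mul_fderiv_eq_neg_fderiv_mul_of_integrable (hint1 i) (hint2 i) (hint3 i)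
      (fun x _ => hc.differentiable one_ne_zero x) (fun x _ => (hYi i).differentiable one_ne_zero x)
  · intro i _
    simpa only [hd] using hint2 i

lemma core {n : ℕ} (Y : EuclideanSpace ℝ (Fin n) → EuclideanSpace ℝ (Fin n))
    (hY : ContDiff ℝ 1 Y) (hYint : Integrable Y) (I h : EuclideanSpace ℝ (Fin n) → ℝ)
    (hI0 : ∀ x, 0 ≤ I x) (hIc : Continuous I) (hh : Integrable h)
    (heq : ∀ x, dvg Y x = I x + h x) :
    ∫ x, h x ≤ 0 ∧ (∫ x, h x = 0 → ∀ x, I x = 0) := by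
  let b : ContDiffBump (0 : EuclideanSpace ℝ (Fin n)) := ⟨1, 2, one_pos, one_lt_two⟩
  have hbc : ContDiff ℝ 1 b := b.contDiff
  have hbs : HasCompactSupport b := b.hasCompactSupport
  obtain ⟨K, hK⟩ : ∃ K, ∀ x, ‖fderiv ℝ b x‖ ≤ K :=
    (hbs.fderiv ℝ).exists_bound_of_continuous (hbc.continuous_fderiv one_ne_zero)
  have hK0 : 0 ≤ K := (norm_nonneg _).trans (hK 0)
  let r : ℕ → ℝ := fun k => ((k : ℝ) + 1)⁻¹
  have hr : ∀ k, 0 < r k := fun k => by positivity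
  let c : ℕ → EuclideanSpace ℝ (Fin n) → ℝ := fun k x => b (r k • x)
  have hcc : ∀ k, ContDiff ℝ 1 (c k) := fun k => hbc.comp (contDiff_const_smul _)
  have hcs : ∀ k, HasCompactSupport (c k) := fun k => hbs.comp_smul (hr k).ne'
  have hc0 : ∀ k x, 0 ≤ c k x := fun k x => b.nonneg
  have hc1 : ∀ k x, c k x ≤ 1 := fun k x => b.le_one
  have hcd : ∀ k x, fderiv ℝ (c k) x = r k • fderiv ℝ b (r k • x) := fun k x => by
    have := fderiv_comp_smul (𝕜 := ℝ) (f := b) (x := x) (r k)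
    exact this
  have hrlim : Filter.Tendsto r Filter.atTop (nhds 0) := by
    simpa [r] using tendsto_one_div_add_atTop_nhds_zero_nat (𝕜 := ℝ)
  have hlim1 : Filter.Tendsto (fun k => ∫ x, fderiv ℝ (c k) x (Y x)) Filter.atTop (nhds 0) := by
    have hb : ∀ k, ‖∫ x, fderiv ℝ (c k) x (Y x)‖ ≤ r k * (K * ∫ x, ‖Y x‖) := by
      intro k
      calc ‖∫ x, fderiv ℝ (c k) x (Y x)‖ ≤ ∫ x, r k * (K * ‖Y x‖) := by
            apply norm_integral_le_of_norm_le
            · exact (hYint.norm.const_mul K).const_mul (r k)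
            · refine Filter.Eventually.of_forall fun x => ?_
              rw [hcd, smul_apply, norm_smul, Real.norm_of_nonneg (hr k).le]
              refine mul_le_mul_of_nonneg_left ?_ (hr k).le
              exact (ContinuousLinearMap.le_opNorm _ _).trans
                (mul_le_mul_of_nonneg_right (hK _) (norm_nonneg _))
        _ = _ := by rw [integral_const_mul, integral_const_mul]
    apply squeeze_zero_norm hb
    simpa using hrlim.mul_const (K * ∫ x, ‖Y x‖)
  have hclim : ∀ x, Filter.Tendsto (fun k => c k x) Filter.atTop (nhds 1) := by
    intro x
    have h1 : Filter.Tendsto (fun k => b (r k • x)) Filter.atTop (nhds (b ((0:ℝ) • x))) :=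
      (b.continuous.tendsto _).comp (hrlim.smul_const x)
    have h2 : b ((0:ℝ) • x) = 1 := by
      apply b.one_of_mem_closedBall
      simp [b]
    rw [h2] at h1
    exact h1
  have hlim2 : Filter.Tendsto (fun k => ∫ x, c k x * h x) Filter.atTop (nhds (∫ x, h x)) := by
    apply tendsto_integral_of_dominated_convergence (fun x => ‖h x‖)
    · intro k
      exact ((hcc k).continuous.aestronglyMeasurable).mul hh.aestronglyMeasurable
    · exact hh.norm
    · intro k
      refine Filter.Eventually.of_forall fun x => ?_
      rw [norm_mul, Real.norm_of_nonneg (hc0 k x)]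
      exact mul_le_of_le_one_left (norm_nonneg _) (hc1 k x)
    · refine Filter.Eventually.of_forall fun x => ?_
      simpa using (hclim x).mul_const (h x)
  have hIint : ∀ k, Integrable (fun x => c k x * I x) := fun k =>
    ((hcc k).continuous.mul hIc).integrable_of_hasCompactSupport (hcs k).mul_right
  have hhint : ∀ k, Integrable (fun x => c k x * h x) := fun k => by
    refine hh.norm.mono' (((hcc k).continuous.aestronglyMeasurable).mul hh.aestronglyMeasurable) ?_
    refine Filter.Eventually.of_forall fun x => ?_
    rw [norm_mul, Real.norm_of_nonneg (hc0 k x)]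
    exact mul_le_of_le_one_left (norm_nonneg _) (hc1 k x)
  have hid : ∀ k, ∫ x, c k x * I x = - (∫ x, fderiv ℝ (c k) x (Y x)) - ∫ x, c k x * h x := by
    intro k
    rw [← ibp Y hY (c k) (hcc k) (hcs k)]
    simp only [heq, mul_add]
    rw [integral_add (hIint k) (hhint k)]; ring
  have hlim3 : Filter.Tendsto (fun k => ∫ x, c k x * I x) Filter.atTop (nhds (- ∫ x, h x)) := by
    simp only [hid]
    simpa using hlim1.neg.sub hlim2
  have hnn : ∀ k, 0 ≤ ∫ x, c k x * I x := fun k =>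
    integral_nonneg fun x => mul_nonneg (hc0 k x) (hI0 x)
  refine ⟨?_, ?_⟩
  · have := ge_of_tendsto' hlim3 hnn
    linarith
  · intro hz x₀
    rw [hz, neg_zero] at hlim3
    obtain ⟨m, hm⟩ := exists_nat_gt ‖x₀‖
    have hle : ∫ x, c m x * I x ≤ 0 := by
      apply ge_of_tendsto hlim3
      filter_upwards [Filter.eventually_ge_atTop (2 * m + 1)] with k hk
      apply integral_mono (hIint m) (hIint k)
      intro x
      refine mul_le_mul_of_nonneg_right ?_ (hI0 x)
      have hk' : (2 * (m:ℝ) + 1) ≤ k := by exact_mod_cast hk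
      by_cases hx : ‖x‖ ≤ 2 * (m + 1)
      · have : c k x = 1 := by
          apply b.one_of_mem_closedBall
          simp only [mem_closedBall_zero_iff, norm_smul, Real.norm_of_nonneg (hr k).le]
          show ((k : ℝ) + 1)⁻¹ * ‖x‖ ≤ 1
          rw [inv_mul_le_iff₀ (by positivity)]
          linarith
        rw [this]; exact hc1 m x
      · have : c m x = 0 := by
          apply b.zero_of_le_dist
          simp only [dist_zero_right, norm_smul, Real.norm_of_nonneg (hr m).le]
          show 2 ≤ ((m : ℝ) + 1)⁻¹ * ‖x‖
          rw [le_inv_mul_iff₀ (by positivity)]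
          linarith
        rw [this]; exact hc0 k x
    by_contra hne
    have hc1 : c m x₀ = 1 := by
      apply b.one_of_mem_closedBall
      simp only [mem_closedBall_zero_iff, norm_smul, Real.norm_of_nonneg (hr m).le]
      show ((m : ℝ) + 1)⁻¹ * ‖x₀‖ ≤ 1
      rw [inv_mul_le_iff₀ (by positivity)]
      linarith
    have := Continuous.integral_pos_of_hasCompactSupport_nonneg_nonzero (μ := volume)
      (f := fun x => c m x * I x) (x := x₀)
      ((hcc m).continuous.mul hIc) (hcs m).mul_right
      (fun x => mul_nonneg (hc0 m x) (hI0 x)) (by simpa [hc1] using hne)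
    linarith

noncomputable def jm {n : ℕ} (L : EuclideanSpace ℝ (Fin n) →L[ℝ] EuclideanSpace ℝ (Fin n)) :
    Matrix (Fin n) (Fin n) ℝ :=
  LinearMap.toMatrix (EuclideanSpace.basisFun (Fin n) ℝ).toBasis
    (EuclideanSpace.basisFun (Fin n) ℝ).toBasis (L : EuclideanSpace ℝ (Fin n) →ₗ[ℝ] EuclideanSpace ℝ (Fin n))

lemma jm_apply {n : ℕ} (L : EuclideanSpace ℝ (Fin n) →L[ℝ] EuclideanSpace ℝ (Fin n)) (i j : Fin n) :
    jm L i j = (L (EuclideanSpace.single j 1)) i := by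
  simp [jm, LinearMap.toMatrix_apply]

lemma jm_comp {n : ℕ} (A B : EuclideanSpace ℝ (Fin n) →L[ℝ] EuclideanSpace ℝ (Fin n)) :
    jm (A.comp B) = jm A * jm B := by
  simp only [jm]
  exact LinearMap.toMatrix_comp _ _ _ _ _

lemma jm_det {n : ℕ} (A : EuclideanSpace ℝ (Fin n) →L[ℝ] EuclideanSpace ℝ (Fin n)) :
    A.det = (jm A).det := by
  rw [jm, LinearMap.det_toMatrix]

lemma jm_eq_one {n : ℕ} (A : EuclideanSpace ℝ (Fin n) →L[ℝ] EuclideanSpace ℝ (Fin n))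
    (h : jm A = 1) : A = ContinuousLinearMap.id ℝ _ := by
  have h1 : (A : EuclideanSpace ℝ (Fin n) →ₗ[ℝ] EuclideanSpace ℝ (Fin n)) = LinearMap.id := by
    apply (LinearMap.toMatrix (EuclideanSpace.basisFun (Fin n) ℝ).toBasis
      (EuclideanSpace.basisFun (Fin n) ℝ).toBasis).injective
    rw [LinearMap.toMatrix_id]; exact h
  ext1 x
  exact congrArg (fun f => f x) h1

lemma grad_inner {n : ℕ} (φ : EuclideanSpace ℝ (Fin n) → ℝ) (x v : EuclideanSpace ℝ (Fin n)) :
    ⟪gradient φ x, v⟫ = fderiv ℝ φ x v := by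
  rw [← toDual_gradient]; rfl

lemma grad_ineq {n : ℕ} {φ : EuclideanSpace ℝ (Fin n) → ℝ} (hd : Differentiable ℝ φ)
    (hc : ConvexOn ℝ Set.univ φ) (x y : EuclideanSpace ℝ (Fin n)) :
    φ x + ⟪gradient φ x, y - x⟫ ≤ φ y := by
  rw [grad_inner]
  have h1 : ConvexOn ℝ Set.univ (fun t : ℝ => φ (x + t • (y - x))) := by
    have := hc.comp_affineMap (AffineMap.lineMap x y : ℝ →ᵃ[ℝ] EuclideanSpace ℝ (Fin n))
    rw [Set.preimage_univ] at this
    have e : (fun t : ℝ => φ (x + t • (y - x))) =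
        φ ∘ (AffineMap.lineMap x y : ℝ →ᵃ[ℝ] EuclideanSpace ℝ (Fin n)) := by
      ext t
      simp [AffineMap.lineMap_apply, add_comm]
    rw [e]
    exact this
  have h2 : HasDerivAt (fun t : ℝ => φ (x + t • (y - x))) (fderiv ℝ φ x (y - x)) 0 := by
    have h3 : HasDerivAt (fun t : ℝ => x + t • (y - x)) (y - x) 0 := by
      simpa using ((hasDerivAt_id (0:ℝ)).smul_const (y - x)).const_add x
    have h4 : HasFDerivAt φ (fderiv ℝ φ x) (x + (0:ℝ) • (y - x)) := by
      simpa using (hd x).hasFDerivAt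
    exact h4.comp_hasDerivAt 0 h3
  have := h1.le_slope_of_hasDerivAt (Set.mem_univ 0) (Set.mem_univ 1) one_pos h2
  simp [slope_def_field] at this
  rw [map_sub]
  linarith

lemma jm_hess {n : ℕ} {φ : EuclideanSpace ℝ (Fin n) → ℝ} (hφ : ContDiff ℝ 2 φ) (hg : Differentiable ℝ (gradient φ))
    (x : EuclideanSpace ℝ (Fin n)) (i j : Fin n) :
    jm (fderiv ℝ (gradient φ) x) i j =
      iteratedFDeriv ℝ 2 φ x ![EuclideanSpace.single i 1, EuclideanSpace.single j 1] := by
  rw [jm_apply, iteratedFDeriv_two_apply]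
  simp only [Matrix.cons_val_zero, Matrix.cons_val_one]
  have hsym : fderiv ℝ (fderiv ℝ φ) x (EuclideanSpace.single i 1) (EuclideanSpace.single j 1) =
      fderiv ℝ (fderiv ℝ φ) x (EuclideanSpace.single j 1) (EuclideanSpace.single i 1) :=
    (hφ.contDiffAt.isSymmSndFDerivAt (by simp)) _ _
  rw [hsym]
  have hd : DifferentiableAt ℝ (fderiv ℝ φ) x :=
    (hφ.fderiv_right (m := 1) (by norm_num)).differentiable one_ne_zero x
  have h2 : ∀ v : EuclideanSpace ℝ (Fin n), v i = ⟪v, EuclideanSpace.single i 1⟫ := by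
    intro v; simp [EuclideanSpace.inner_single_right]
  rw [h2]
  have h3 := (hg x).hasFDerivAt.inner ℝ
    (hasFDerivAt_const (EuclideanSpace.single i (1:ℝ) : EuclideanSpace ℝ (Fin n)) x)
  have h4 := hd.hasFDerivAt.clm_apply
    (hasFDerivAt_const (EuclideanSpace.single i (1:ℝ) : EuclideanSpace ℝ (Fin n)) x)
  simp only [grad_inner] at h3
  have h5 := congrArg (fun L => L (EuclideanSpace.single j 1)) (h3.unique h4)
  simpa using h5

lemma hess_posdef {n : ℕ} {φ : EuclideanSpace ℝ (Fin n) → ℝ} (hφ : ContDiff ℝ 2 φ) (hg : Differentiable ℝ (gradient φ))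
    (hc : ConvexOn ℝ Set.univ φ) (x : EuclideanSpace ℝ (Fin n)) (hdet : hessDet φ x ≠ 0) :
    (jm (fderiv ℝ (gradient φ) x)).PosDef ∧ (jm (fderiv ℝ (gradient φ) x)).det = hessDet φ x := by
  have hm : jm (fderiv ℝ (gradient φ) x) = Matrix.of fun i j : Fin n =>
    iteratedFDeriv ℝ 2 φ x ![EuclideanSpace.single i 1, EuclideanSpace.single j 1] := by
    ext i j; rw [jm_hess hφ hg]; rfl
  have hdet' : (jm (fderiv ℝ (gradient φ) x)).det = hessDet φ x := by rw [hm]; rfl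
  refine ⟨?_, hdet'⟩
  have hdiff : DifferentiableAt ℝ (gradient φ) x := hg x
  have hpsd : (jm (fderiv ℝ (gradient φ) x)).PosSemidef := by
    apply Matrix.PosSemidef.of_dotProduct_mulVec_nonneg
    · ext i j
      rw [Matrix.conjTranspose_apply, jm_hess hφ hg, jm_hess hφ hg, iteratedFDeriv_two_apply, iteratedFDeriv_two_apply]
      exact (hφ.contDiffAt.isSymmSndFDerivAt (by simp)) _ _
    · intro v
      let w : EuclideanSpace ℝ (Fin n) := WithLp.toLp 2 v
      have h1 : star v ⬝ᵥ (jm (fderiv ℝ (gradient φ) x)).mulVec v = ⟪fderiv ℝ (gradient φ) x w, w⟫ := by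
        have h2 : (jm (fderiv ℝ (gradient φ) x)).mulVec v = (fderiv ℝ (gradient φ) x w).ofLp := by
          have := LinearMap.toMatrix_mulVec_repr (EuclideanSpace.basisFun (Fin n) ℝ).toBasis
            (EuclideanSpace.basisFun (Fin n) ℝ).toBasis (fderiv ℝ (gradient φ) x : EuclideanSpace ℝ (Fin n) →ₗ[ℝ] EuclideanSpace ℝ (Fin n)) w
          ext i
          have h3 := congrFun this i
          have h4 : ⇑((EuclideanSpace.basisFun (Fin n) ℝ).toBasis.repr w) = v := by
            ext k; simp [w]
          rw [h4] at h3
          simpa [jm] using h3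
        rw [h2, EuclideanSpace.inner_eq_star_dotProduct, dotProduct_comm]
        simp [w, dotProduct_comm]
      rw [h1]
      have hder : HasDerivAt (fun t : ℝ => ⟪gradient φ (x + t • w), w⟫) ⟪fderiv ℝ (gradient φ) x w, w⟫ 0 := by
        have h3 : HasDerivAt (fun t : ℝ => x + t • w) w 0 := by
          simpa using ((hasDerivAt_id (0:ℝ)).smul_const w).const_add x
        have h4 : HasFDerivAt (gradient φ) (fderiv ℝ (gradient φ) x) (x + (0:ℝ) • w) := by
          simpa using hdiff.hasFDerivAt
        have h5 := h4.comp_hasDerivAt 0 h3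
        simpa using h5.inner ℝ (hasDerivAt_const (0:ℝ) w)
      have hmono : Monotone (fun t : ℝ => ⟪gradient φ (x + t • w), w⟫) := by
        intro s t hst
        rcases hst.eq_or_lt with rfl | hlt
        · exact le_rfl
        have hd : Differentiable ℝ φ := hφ.differentiable two_ne_zero
        have e1 := grad_ineq hd hc (x + s • w) (x + t • w)
        have e2 := grad_ineq hd hc (x + t • w) (x + s • w)
        have e3 : x + t • w - (x + s • w) = (t - s) • w := by module
        have e4 : x + s • w - (x + t • w) = -((t - s) • w) := by module
        rw [e3, inner_smul_right] at e1
        rw [e4, inner_neg_right, inner_smul_right] at e2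
        have : 0 < t - s := by linarith
        show ⟪gradient φ (x + s • w), w⟫ ≤ ⟪gradient φ (x + t • w), w⟫
        nlinarith
      rw [← hder.deriv]
      exact hmono.deriv_nonneg
  rw [hpsd.posDef_iff_det_ne_zero, hdet']
  exact hdet

lemma grow {n : ℕ} {φ : EuclideanSpace ℝ (Fin n) → ℝ} (hd : Differentiable ℝ φ)
    (hc : ConvexOn ℝ Set.univ φ) {S : Set (EuclideanSpace ℝ (Fin n))} (hS : IsOpen S)
    (h0 : 0 ∈ S) (hr : Set.range (gradient φ) = S)
    (ψ : EuclideanSpace ℝ (Fin n) → EuclideanSpace ℝ (Fin n)) (hψ : ContinuousOn ψ S)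
    (hinv : ∀ x, ψ (gradient φ x) = x) :
    ∃ ε > 0, ∃ C, ∀ x, ε * ‖x‖ - C ≤ φ x := by
  obtain ⟨ε, hε, hb⟩ := Metric.nhds_basis_closedBall.mem_iff.1 (hS.mem_nhds h0)
  have hcont : ContinuousOn (fun p => ⟪p, ψ p⟫ - φ (ψ p)) (Metric.closedBall 0 ε) := by
    have h1 := hψ.mono hb
    exact (continuousOn_id.inner h1).sub (hd.continuous.comp_continuousOn h1)
  obtain ⟨C, hC⟩ := (isCompact_closedBall (0 : EuclideanSpace ℝ (Fin n)) ε).bddAbove_image hcont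
  refine ⟨ε, hε, C, fun x => ?_⟩
  have hp : (ε / ‖x‖) • x ∈ Metric.closedBall (0 : EuclideanSpace ℝ (Fin n)) ε := by
    rw [mem_closedBall_zero_iff, norm_smul, Real.norm_of_nonneg (by positivity)]
    by_cases hx : ‖x‖ = 0
    · rw [hx]; simpa using hε.le
    · rw [div_mul_cancel₀ _ hx]
  have hin : ⟪(ε / ‖x‖) • x, x⟫ = ε * ‖x‖ := by
    rw [real_inner_smul_left, real_inner_self_eq_norm_sq]
    by_cases hx : ‖x‖ = 0
    · rw [hx]; simp
    · field_simp
  obtain ⟨z, hz⟩ : ∃ z, gradient φ z = (ε / ‖x‖) • x := by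
    have := hb hp
    rw [← hr] at this
    exact this
  have h1 := hC (Set.mem_image_of_mem _ hp)
  simp only [← hz, hinv] at h1
  have h2 := grad_ineq hd hc z x
  rw [inner_sub_right] at h2
  rw [← hz] at hin
  linarith

lemma grow_int {n : ℕ} {φ : EuclideanSpace ℝ (Fin n) → ℝ} (hd : Continuous φ) {ε C : ℝ}
    (hε : 0 < ε) (h : ∀ x, ε * ‖x‖ - C ≤ φ x) :
    Integrable (fun x => (1 + ‖x‖) * Real.exp (-φ x)) := by
  have hi : Integrable (fun x : EuclideanSpace ℝ (Fin n) => (1 + ‖x‖) ^ (-((n + 1 : ℕ) : ℝ))) :=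
    integrable_one_add_norm (by simp)
  refine (hi.const_mul (Real.exp C * Real.exp ε * (n+2).factorial / ε ^ (n+2))).mono'
    (by fun_prop) (Filter.Eventually.of_forall fun x => ?_)
  have hs : 0 ≤ ‖x‖ := norm_nonneg x
  rw [Real.norm_of_nonneg (by positivity), Real.rpow_neg (by positivity), Real.rpow_natCast]
  have h1 := Real.pow_div_factorial_le_exp (ε * (1 + ‖x‖)) (by positivity) (n+2)
  have h2 : Real.exp (-φ x) ≤ Real.exp C * Real.exp ε * (Real.exp (ε * (1 + ‖x‖)))⁻¹ := by
    rw [← Real.exp_neg, ← Real.exp_add, ← Real.exp_add, Real.exp_le_exp]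
    have := h x
    linarith
  have h3 : (Real.exp (ε * (1 + ‖x‖)))⁻¹ ≤ ((ε * (1 + ‖x‖)) ^ (n+2) / (n+2).factorial)⁻¹ := by
    gcongr
  calc (1 + ‖x‖) * Real.exp (-φ x)
      ≤ (1 + ‖x‖) * (Real.exp C * Real.exp ε * ((ε * (1 + ‖x‖)) ^ (n+2) / (n+2).factorial)⁻¹) := by
        gcongr
        exact h2.trans (by gcongr)
    _ = _ := by
        rw [mul_pow, pow_succ (1 + ‖x‖) (n+1)]
        field_simp

structure Pair {n : ℕ} (φ₀ φ₁ : EuclideanSpace ℝ (Fin n) → ℝ)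
    (T : EuclideanSpace ℝ (Fin n) → EuclideanSpace ℝ (Fin n)) : Prop where
  sm₀ : ContDiff ℝ 1 φ₀
  sm₁ : ContDiff ℝ 1 φ₁
  smG : ContDiff ℝ 1 (gradient φ₀)
  smT : ContDiff ℝ 1 T
  hT : ∀ x, gradient φ₁ (T x) = gradient φ₀ x
  inj : Function.Injective T
  surj : Function.Surjective T
  ma : ∀ x, Real.exp (-φ₁ (T x)) * (jm (fderiv ℝ T x)).det = Real.exp (-φ₀ x)
  mat : ∀ x, 0 < (jm (fderiv ℝ T x)).det ∧
    Real.log (jm (fderiv ℝ T x)).det ≤ (jm (fderiv ℝ T x)).trace - n ∧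
    (Real.log (jm (fderiv ℝ T x)).det = (jm (fderiv ℝ T x)).trace - n → jm (fderiv ℝ T x) = 1)
  bd : ∃ M, ∀ x, ‖gradient φ₀ x‖ ≤ M
  int₀ : Integrable (fun x => (1 + ‖x‖) * Real.exp (-φ₀ x))
  int₁ : Integrable (fun x => (1 + ‖x‖) * Real.exp (-φ₁ x))
  up₀ : ∃ C, ∀ x, |φ₀ x| ≤ C * (1 + ‖x‖)
  up₁ : ∃ C, ∀ x, |φ₁ x| ≤ C * (1 + ‖x‖)

lemma Pair.logdet {n : ℕ} {φ₀ φ₁ : EuclideanSpace ℝ (Fin n) → ℝ}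
    {T : EuclideanSpace ℝ (Fin n) → EuclideanSpace ℝ (Fin n)} (p : Pair φ₀ φ₁ T)
    (x : EuclideanSpace ℝ (Fin n)) :
    Real.log (jm (fderiv ℝ T x)).det = φ₁ (T x) - φ₀ x := by
  have := congrArg Real.log (p.ma x)
  rw [Real.log_mul (Real.exp_pos _).ne' (p.mat x).1.ne', Real.log_exp, Real.log_exp] at this
  linarith

lemma Pair.cov {n : ℕ} {φ₀ φ₁ : EuclideanSpace ℝ (Fin n) → ℝ}
    {T : EuclideanSpace ℝ (Fin n) → EuclideanSpace ℝ (Fin n)} (p : Pair φ₀ φ₁ T)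
    (F : EuclideanSpace ℝ (Fin n) → ℝ) :
    (Integrable (fun y => F y * Real.exp (-φ₁ y)) →
      Integrable (fun x => F (T x) * Real.exp (-φ₀ x))) ∧
    ∫ y, F y * Real.exp (-φ₁ y) = ∫ x, F (T x) * Real.exp (-φ₀ x) := by
  have hd : ∀ x ∈ Set.univ, HasFDerivWithinAt T (fderiv ℝ T x) Set.univ x := fun x _ =>
    (p.smT.differentiable one_ne_zero x).hasFDerivAt.hasFDerivWithinAt
  have he : ∀ x, |(fderiv ℝ T x).det| • (F (T x) * Real.exp (-φ₁ (T x))) =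
      F (T x) * Real.exp (-φ₀ x) := by
    intro x
    rw [jm_det, abs_of_pos (p.mat x).1, ← p.ma x, smul_eq_mul]; ring
  have hi : T '' Set.univ = Set.univ := by rw [Set.image_univ]; exact p.surj.range_eq
  constructor
  · intro h
    have := (integrableOn_image_iff_integrableOn_abs_det_fderiv_smul volume MeasurableSet.univ hd
      p.inj.injOn (fun y => F y * Real.exp (-φ₁ y)))
    simp only [hi, integrableOn_univ, he] at this
    exact this.1 h
  · have := (integral_image_eq_integral_abs_det_fderiv_smul volume MeasurableSet.univ hd
      p.inj.injOn (fun y => F y * Real.exp (-φ₁ y)))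
    simpa only [hi, setIntegral_univ, he] using this

lemma Pair.half {n : ℕ} {φ₀ φ₁ : EuclideanSpace ℝ (Fin n) → ℝ}
    {T : EuclideanSpace ℝ (Fin n) → EuclideanSpace ℝ (Fin n)} (p : Pair φ₀ φ₁ T) :
    ∫ x, (⟪x, gradient φ₀ x⟫ - φ₀ x - ⟪T x, gradient φ₀ x⟫ + φ₁ (T x)) * Real.exp (-φ₀ x) ≤ 0 ∧
    (∫ x, (⟪x, gradient φ₀ x⟫ - φ₀ x - ⟪T x, gradient φ₀ x⟫ + φ₁ (T x)) * Real.exp (-φ₀ x) = 0 →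
      ∀ x, fderiv ℝ T x = ContinuousLinearMap.id ℝ _) := by
  obtain ⟨M, hM⟩ := p.bd
  obtain ⟨C₀, hC₀⟩ := p.up₀
  obtain ⟨C₁, hC₁⟩ := p.up₁
  have c0 := p.sm₀.continuous
  have c1 := p.sm₁.continuous
  have cG := p.smG.continuous
  have cT := p.smT.continuous
  have hiT := (p.cov (fun y => 1 + ‖y‖)).1 p.int₁
  have hM0 : 0 ≤ M := (norm_nonneg _).trans (hM 0)
  have hYd : ∀ x, HasFDerivAt (fun x => Real.exp (-φ₀ x) • (T x - x)) _ x := fun x =>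
    ((p.sm₀.differentiable one_ne_zero x).hasFDerivAt.neg.exp).smul
      ((p.smT.differentiable one_ne_zero x).hasFDerivAt.sub (hasFDerivAt_id x))
  have hdv : ∀ x, dvg (fun x => Real.exp (-φ₀ x) • (T x - x)) x =
      Real.exp (-φ₀ x) * ((jm (fderiv ℝ T x)).trace - n - ⟪T x - x, gradient φ₀ x⟫) := by
    intro x
    have hs : ⟪T x - x, gradient φ₀ x⟫ =
      ∑ i, fderiv ℝ φ₀ x (EuclideanSpace.single i 1) * (T x - x) i := by
      rw [real_inner_comm, grad_inner]
      conv_lhs => rw [← (EuclideanSpace.basisFun (Fin n) ℝ).sum_repr (T x - x)]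
      simp [map_sum, mul_comm]
    have hn : (n : ℝ) = ∑ i : Fin n, (1:ℝ) := by simp
    rw [dvg, (hYd x).fderiv, hs, Matrix.trace, hn, ← Finset.sum_sub_distrib,
      ← Finset.sum_sub_distrib, Finset.mul_sum]
    refine Finset.sum_congr rfl fun i _ => ?_
    simp [jm_apply]
    ring
  have key := core (fun x => Real.exp (-φ₀ x) • (T x - x)) ?_ ?_
    (fun x => Real.exp (-φ₀ x) * ((jm (fderiv ℝ T x)).trace - n - (φ₁ (T x) - φ₀ x)))
    (fun x => (⟪x, gradient φ₀ x⟫ - φ₀ x - ⟪T x, gradient φ₀ x⟫ + φ₁ (T x)) * Real.exp (-φ₀ x))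
    ?_ ?_ ?_ ?_
  · refine ⟨key.1, fun h x => ?_⟩
    have h1 := key.2 h x
    apply jm_eq_one
    apply (p.mat x).2.2
    rw [p.logdet]
    have h2 := (mul_eq_zero.1 h1).resolve_left (Real.exp_pos _).ne'
    linarith
  · exact (p.sm₀.neg.exp).smul (p.smT.sub contDiff_id)
  · refine (hiT.add p.int₀).mono' (by fun_prop) (Filter.Eventually.of_forall fun x => ?_)
    rw [norm_smul, Real.norm_of_nonneg (Real.exp_pos _).le]
    simp only [Pi.add_apply]
    rw [← add_mul, mul_comm]
    gcongr
    have := norm_sub_le (T x) x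
    linarith
  · intro x
    refine mul_nonneg (Real.exp_pos _).le ?_
    have := (p.mat x).2.1
    rw [p.logdet] at this
    linarith
  · have h1 := p.smT.continuous_fderiv one_ne_zero
    have h2 : Continuous fun x => (jm (fderiv ℝ T x)).trace := by
      simp only [Matrix.trace, Matrix.diag, jm_apply]
      fun_prop
    fun_prop
  · refine ((hiT.const_mul (M + |C₁|)).add (p.int₀.const_mul (M + |C₀|))).mono' (by fun_prop)
      (Filter.Eventually.of_forall fun x => ?_)
    rw [norm_mul, Real.norm_of_nonneg (Real.exp_pos _).le]
    simp only [Pi.add_apply]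
    rw [← mul_assoc, ← mul_assoc, ← add_mul]
    gcongr
    have a1 : |⟪x, gradient φ₀ x⟫| ≤ ‖x‖ * M :=
      (abs_real_inner_le_norm _ _).trans (mul_le_mul_of_nonneg_left (hM x) (norm_nonneg _))
    have a2 : |⟪T x, gradient φ₀ x⟫| ≤ ‖T x‖ * M :=
      (abs_real_inner_le_norm _ _).trans (mul_le_mul_of_nonneg_left (hM x) (norm_nonneg _))
    have a3 : |φ₀ x| ≤ |C₀| * (1 + ‖x‖) := (hC₀ x).trans
      (mul_le_mul_of_nonneg_right (le_abs_self _) (by positivity))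
    have a4 : |φ₁ (T x)| ≤ |C₁| * (1 + ‖T x‖) := (hC₁ _).trans
      (mul_le_mul_of_nonneg_right (le_abs_self _) (by positivity))
    rw [Real.norm_eq_abs]
    rw [abs_le] at *
    constructor <;> nlinarith
  · intro x
    rw [hdv, inner_sub_left]; ring

lemma Pair.fin {n : ℕ} {φ₀ φ₁ : EuclideanSpace ℝ (Fin n) → ℝ}
    {T T' : EuclideanSpace ℝ (Fin n) → EuclideanSpace ℝ (Fin n)} (p : Pair φ₀ φ₁ T)
    (q : Pair φ₁ φ₀ T') (hTT : ∀ x, T' (T x) = x) :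
    ∃ a : EuclideanSpace ℝ (Fin n), ∀ x, φ₁ x = φ₀ (x + a) := by
  have h1 := p.half
  have h2 := q.half.1
  rw [(p.cov _).2] at h2
  have e : ∀ x, (⟪T x, gradient φ₁ (T x)⟫ - φ₁ (T x) - ⟪T' (T x), gradient φ₁ (T x)⟫ +
      φ₀ (T' (T x))) * Real.exp (-φ₀ x) =
      -((⟪x, gradient φ₀ x⟫ - φ₀ x - ⟪T x, gradient φ₀ x⟫ + φ₁ (T x)) * Real.exp (-φ₀ x)) := by
    intro x
    rw [hTT, p.hT]; ring
  simp only [e] at h2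
  rw [integral_neg] at h2
  have h3 := h1.2 (le_antisymm h1.1 (by linarith))
  have hdf : Differentiable ℝ (fun x => T x - x) :=
    (p.smT.differentiable one_ne_zero).sub differentiable_id
  have hc : ∀ x, T x - x = T 0 - 0 := fun x => by
    refine is_const_of_fderiv_eq_zero (𝕜 := ℝ) hdf (fun x => ?_) x 0
    have := (p.smT.differentiable one_ne_zero x).hasFDerivAt.sub (hasFDerivAt_id x)
    rw [h3] at this
    rw [sub_self] at this
    exact this.fderiv
  refine ⟨-T 0, fun x => ?_⟩
  have h4 : T (x + -T 0) = x := by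
    have := hc (x + -T 0)
    rw [sub_zero, sub_eq_iff_eq_add] at this
    rw [this]; abel
  have h5 := p.logdet (x + -T 0)
  have h6 : jm (ContinuousLinearMap.id ℝ (EuclideanSpace ℝ (Fin n))) = 1 := by
    simp only [jm]; exact LinearMap.toMatrix_id _
  rw [h3, h6, h4] at h5
  simp at h5
  rw [← sub_eq_add_neg] 
  rw [← sub_eq_add_neg] at h5
  linarith

lemma mkPair {n : ℕ} {P : Set (EuclideanSpace ℝ (Fin n))}
    (hPcomp : IsCompact P)
    (h0 : (0 : EuclideanSpace ℝ (Fin n)) ∈ interior P)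
    {g : EuclideanSpace ℝ (Fin n) → ℝ} (hgpos : ∀ p, 0 < g p)
    {φ₀ φ₁ : EuclideanSpace ℝ (Fin n) → ℝ}
    (hφ₀sm : ContDiff ℝ (⊤ : ℕ∞) φ₀) (hφ₀conv : ConvexOn ℝ Set.univ φ₀)
    (hMA₀ : ∀ x, g (gradient φ₀ x) * hessDet φ₀ x = Real.exp (-φ₀ x))
    (hφ₁sm : ContDiff ℝ (⊤ : ℕ∞) φ₁) (hφ₁conv : ConvexOn ℝ Set.univ φ₁)
    (hMA₁ : ∀ x, g (gradient φ₁ x) * hessDet φ₁ x = Real.exp (-φ₁ x))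
    (hG₀ : ContDiff ℝ (⊤ : ℕ∞) (gradient φ₀)) (hG₁ : ContDiff ℝ (⊤ : ℕ∞) (gradient φ₁))
    (hinj₀ : Function.Injective (gradient φ₀))
    (hr₀ : Set.range (gradient φ₀) = interior P) (hr₁ : Set.range (gradient φ₁) = interior P)
    {ψ₀ ψ₁ : EuclideanSpace ℝ (Fin n) → EuclideanSpace ℝ (Fin n)}
    (hψ₀ : ContDiffOn ℝ (⊤ : ℕ∞) ψ₀ (interior P)) (hi₀ : ∀ x, ψ₀ (gradient φ₀ x) = x)
    (hψ₁ : ContDiffOn ℝ (⊤ : ℕ∞) ψ₁ (interior P)) (hi₁ : ∀ x, ψ₁ (gradient φ₁ x) = x) :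
    Pair φ₀ φ₁ (fun x => ψ₁ (gradient φ₀ x)) := by
  have one_le : (1 : WithTop ℕ∞) ≤ ((⊤ : ℕ∞) : WithTop ℕ∞) := by exact_mod_cast le_top
  have two_le : (2 : WithTop ℕ∞) ≤ ((⊤ : ℕ∞) : WithTop ℕ∞) :=
    WithTop.coe_le_coe.2 (le_top : (2 : ℕ∞) ≤ ⊤)
  have hmem₀ : ∀ x, gradient φ₀ x ∈ interior P := fun x => hr₀ ▸ Set.mem_range_self x
  have hmem₁ : ∀ x, gradient φ₁ x ∈ interior P := fun x => hr₁ ▸ Set.mem_range_self x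
  have hT : ∀ x, gradient φ₁ (ψ₁ (gradient φ₀ x)) = gradient φ₀ x := by
    intro x
    obtain ⟨y, hy⟩ : gradient φ₀ x ∈ Set.range (gradient φ₁) := hr₁ ▸ hmem₀ x
    rw [← hy, hi₁]
  have smT : ContDiff ℝ 1 (fun x => ψ₁ (gradient φ₀ x)) :=
    (hψ₁.comp_contDiff hG₀ hmem₀).of_le one_le
  have d0 : Differentiable ℝ φ₀ := (hφ₀sm.of_le one_le).differentiable one_ne_zero
  have d1 : Differentiable ℝ φ₁ := (hφ₁sm.of_le one_le).differentiable one_ne_zero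
  have dG0 : Differentiable ℝ (gradient φ₀) := (hG₀.of_le one_le).differentiable one_ne_zero
  have dG1 : Differentiable ℝ (gradient φ₁) := (hG₁.of_le one_le).differentiable one_ne_zero
  have hH0 : ∀ x, hessDet φ₀ x ≠ 0 := fun x h => by
    have := hMA₀ x
    rw [h, mul_zero] at this
    exact (Real.exp_pos _).ne this
  have hH1 : ∀ x, hessDet φ₁ x ≠ 0 := fun x h => by
    have := hMA₁ x
    rw [h, mul_zero] at this
    exact (Real.exp_pos _).ne this
  have P0 := fun x => hess_posdef (hφ₀sm.of_le two_le) dG0 hφ₀conv x (hH0 x)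
  have P1 := fun x => hess_posdef (hφ₁sm.of_le two_le) dG1 hφ₁conv x (hH1 x)
  have hAM : ∀ x, jm (fderiv ℝ (gradient φ₁) (ψ₁ (gradient φ₀ x))) *
      jm (fderiv ℝ (fun x => ψ₁ (gradient φ₀ x)) x) = jm (fderiv ℝ (gradient φ₀) x) := by
    intro x
    rw [← jm_comp]
    congr 1
    have h1 := (dG1 (ψ₁ (gradient φ₀ x))).hasFDerivAt.comp x
      (smT.differentiable one_ne_zero x).hasFDerivAt
    have h2 : (gradient φ₁ ∘ fun x => ψ₁ (gradient φ₀ x)) = gradient φ₀ := funext hT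
    rw [h2] at h1
    exact h1.fderiv.symm
  obtain ⟨R, hR⟩ := hPcomp.isBounded.exists_norm_le
  have b0 : ∀ x, ‖gradient φ₀ x‖ ≤ R := fun x => hR _ (interior_subset (hmem₀ x))
  have b1 : ∀ x, ‖gradient φ₁ x‖ ≤ R := fun x => hR _ (interior_subset (hmem₁ x))
  obtain ⟨ε₀, hε₀, C₀, g0⟩ := grow d0 hφ₀conv isOpen_interior h0 hr₀ ψ₀ hψ₀.continuousOn hi₀
  obtain ⟨ε₁, hε₁, C₁, g1⟩ := grow d1 hφ₁conv isOpen_interior h0 hr₁ ψ₁ hψ₁.continuousOn hi₁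
  have up : ∀ {φ : EuclideanSpace ℝ (Fin n) → ℝ} {ε C : ℝ}, Differentiable ℝ φ →
      ConvexOn ℝ Set.univ φ → 0 < ε → (∀ x, ε * ‖x‖ - C ≤ φ x) → (∀ x, ‖gradient φ x‖ ≤ R) →
      ∃ K, ∀ x, |φ x| ≤ K * (1 + ‖x‖) := by
    intro φ ε C hd hc hε hg hb
    refine ⟨|φ 0| + R + |C|, fun x => ?_⟩
    have h1 := grad_ineq hd hc x 0
    have h2 : |⟪gradient φ x, 0 - x⟫| ≤ R * ‖x‖ := by
      refine (abs_real_inner_le_norm _ _).trans ?_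
      rw [zero_sub, norm_neg]
      exact mul_le_mul_of_nonneg_right (hb x) (norm_nonneg _)
    have hR0 : 0 ≤ R := (norm_nonneg _).trans (hb 0)
    have h3 := hg x
    have hx := norm_nonneg x
    have h4 := le_abs_self (φ 0)
    have h5 := le_abs_self C
    have h6 := abs_nonneg (φ 0)
    have h7 := abs_nonneg C
    have h8 := mul_nonneg h6 hx
    have h9 := mul_nonneg h7 hx
    have h10 := mul_nonneg hε.le hx
    have h11 := mul_nonneg hR0 hx
    rw [abs_le] at h2 ⊢
    constructor <;> nlinarith
  refine ⟨hφ₀sm.of_le one_le, hφ₁sm.of_le one_le, hG₀.of_le one_le, smT, hT, ?_, ?_, ?_, ?_,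
    ⟨R, b0⟩, grow_int d0.continuous hε₀ g0, grow_int d1.continuous hε₁ g1,
    up d0 hφ₀conv hε₀ g0 b0, up d1 hφ₁conv hε₁ g1 b1⟩
  · intro x y hxy
    apply hinj₀
    rw [← hT x, ← hT y]
    exact congrArg _ hxy
  · intro y
    obtain ⟨x, hx⟩ : gradient φ₁ y ∈ Set.range (gradient φ₀) := hr₀ ▸ hmem₁ y
    exact ⟨x, by simp only [hx, hi₁]⟩
  · intro x
    have hdet := congrArg Matrix.det (hAM x)
    rw [Matrix.det_mul, (P0 x).2, (P1 _).2] at hdet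
    rw [← hMA₁, ← hMA₀, hT, mul_assoc, hdet]
  · intro x
    exact mat_ineq _ _ _ (P1 _).1 (P0 x).1 (hAM x)

/-- Two smooth convex solutions of `g(∇φ) det D²φ = e^{-φ}`
whose gradients are diffeomorphisms onto the interior of the convex body `P`
differ by a translation: `φ₁(x) = φ₀(x + a)` for some vector `a`. -/
theorem statement2 {n : ℕ} (P : Set (EuclideanSpace ℝ (Fin n)))
    (hPcomp : IsCompact P) (hPconv : Convex ℝ P)
    (h0 : (0 : EuclideanSpace ℝ (Fin n)) ∈ interior P)
    (g : EuclideanSpace ℝ (Fin n) → ℝ)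
    (hg : ContDiff ℝ (⊤ : ℕ∞) g) (hgpos : ∀ p, 0 < g p)
    (φ₀ φ₁ : EuclideanSpace ℝ (Fin n) → ℝ)
    (hφ₀sm : ContDiff ℝ (⊤ : ℕ∞) φ₀) (hφ₀conv : ConvexOn ℝ Set.univ φ₀)
    (hMA₀ : ∀ x, g (gradient φ₀ x) * hessDet φ₀ x = Real.exp (-φ₀ x))
    (hdiffeo₀ : IsGradDiffeoOnto φ₀ (interior P))
    (hφ₁sm : ContDiff ℝ (⊤ : ℕ∞) φ₁) (hφ₁conv : ConvexOn ℝ Set.univ φ₁)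
    (hMA₁ : ∀ x, g (gradient φ₁ x) * hessDet φ₁ x = Real.exp (-φ₁ x))
    (hdiffeo₁ : IsGradDiffeoOnto φ₁ (interior P)) :
    ∃ a : EuclideanSpace ℝ (Fin n), ∀ x, φ₁ x = φ₀ (x + a) := by
  obtain ⟨hG₀, hinj₀, hr₀, ψ₀, hψ₀, hi₀⟩ := hdiffeo₀
  obtain ⟨hG₁, hinj₁, hr₁, ψ₁, hψ₁, hi₁⟩ := hdiffeo₁
  have p := mkPair hPcomp h0 hgpos hφ₀sm hφ₀conv hMA₀ hφ₁sm hφ₁conv hMA₁ hG₀ hG₁ hinj₀ hr₀ hr₁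
    hψ₀ hi₀ hψ₁ hi₁
  have q := mkPair hPcomp h0 hgpos hφ₁sm hφ₁conv hMA₁ hφ₀sm hφ₀conv hMA₀ hG₁ hG₀ hinj₁ hr₁ hr₀
    hψ₁ hi₁ hψ₀ hi₀
  refine p.fin q fun x => ?_
  rw [p.hT, hi₀]
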